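/- Let δ, μ, ε, τ ∈ ℂ with Re(δ) > 0 and Re(τ) > max{0, Re(μ−ε)}. Then for x > 0, the left-sided Saigo fractional integral of the power function satisfies (I₀₊^{δ,μ,ε} t^{τ−1})(x) = [Γ(τ) Γ(τ+ε−μ)] / [Γ(τ−μ) Γ(τ+ε+δ)] · x^{τ−μ−1}. -/

import Mathlib

open MeasureTheory

/-- Pochhammer symbol `(a)_n = a (a+1) ⋯ (a+n−1)`. -/
noncomputable def poch (a : ℂ) (n : ℕ) : ℂ := ∏ i ∈ Finset.range n, (a + i)

/-- Generalized hypergeometric function `ₚF_q(a₁,…,a_p; c₁,…,c_q; x)`. -/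
noncomputable def genHyp (as cs : List ℂ) (x : ℂ) : ℂ :=
  ∑' k : ℕ, ((as.map (fun a => poch a k)).prod / (cs.map (fun c => poch c k)).prod)
    * x ^ k / (Nat.factorial k)

/-- Appell's double hypergeometric function `F₃(a,a′,b,b′;c;x,y)`. -/
noncomputable def appellF3 (a a' b b' c x y : ℂ) : ℂ :=
  ∑' mn : ℕ × ℕ, poch a mn.1 * poch a' mn.2 * poch b mn.1 * poch b' mn.2 /
    (poch c (mn.1 + mn.2) * (Nat.factorial mn.1) * (Nat.factorial mn.2)) * x ^ mn.1 * y ^ mn.2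

/-- Generalized binomial coefficient `binom(a,k) = a(a−1)⋯(a−k+1)/k!`. -/
noncomputable def gbinom (a : ℂ) (k : ℕ) : ℂ := (∏ i ∈ Finset.range k, (a - i)) / (Nat.factorial k)

/-- Jacobi type orthogonal polynomial `M_n^{(p,q)}(x)`. -/
noncomputable def jacobiM (n : ℕ) (p q x : ℂ) : ℂ :=
  (-1) ^ n * (Nat.factorial n) * ∑ k ∈ Finset.range (n + 1),
    gbinom (p - n - 1) k * gbinom (q + n) (n - k) * (-x) ^ k

/-- Left-sided Marichev–Saigo–Maeda fractional integral operator. -/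
noncomputable def msmLeft (δ δ' μ μ' ε : ℂ) (f : ℝ → ℂ) (x : ℝ) : ℂ :=
  (x : ℂ) ^ (-δ) / Complex.Gamma ε *
    ∫ t in Set.Ioo (0 : ℝ) x, ((x - t : ℝ) : ℂ) ^ (ε - 1) * (t : ℂ) ^ (-δ') *
      appellF3 δ δ' μ μ' ε ((1 - t / x : ℝ) : ℂ) ((1 - x / t : ℝ) : ℂ) * f t

/-- Right-sided Marichev–Saigo–Maeda fractional integral operator. -/
noncomputable def msmRight (δ δ' μ μ' ε : ℂ) (f : ℝ → ℂ) (x : ℝ) : ℂ :=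
  (x : ℂ) ^ (-δ') / Complex.Gamma ε *
    ∫ t in Set.Ioi x, ((t - x : ℝ) : ℂ) ^ (ε - 1) * (t : ℂ) ^ (-δ) *
      appellF3 δ δ' μ μ' ε ((1 - t / x : ℝ) : ℂ) ((1 - x / t : ℝ) : ℂ) * f t

/-- Left-sided Saigo fractional integral operator. -/
noncomputable def saigoLeft (δ μ ε : ℂ) (f : ℝ → ℂ) (x : ℝ) : ℂ :=
  (x : ℂ) ^ (-δ - μ) / Complex.Gamma δ *
    ∫ t in Set.Ioo (0 : ℝ) x, ((x - t : ℝ) : ℂ) ^ (δ - 1) *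
      genHyp [δ + μ, -ε] [δ] ((1 - t / x : ℝ) : ℂ) * f t

/-- Right-sided Saigo fractional integral operator. -/
noncomputable def saigoRight (δ μ ε : ℂ) (f : ℝ → ℂ) (x : ℝ) : ℂ :=
  (1 / Complex.Gamma δ) *
    ∫ t in Set.Ioi x, ((t - x : ℝ) : ℂ) ^ (δ - 1) * (t : ℂ) ^ (-δ - μ) *
      genHyp [δ + μ, -ε] [δ] ((1 - x / t : ℝ) : ℂ) * f t

/-- Left-sided Riemann–Liouville fractional integral operator. -/
noncomputable def rlLeft (δ : ℂ) (f : ℝ → ℂ) (x : ℝ) : ℂ :=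
  (1 / Complex.Gamma δ) * ∫ t in Set.Ioo (0 : ℝ) x, ((x - t : ℝ) : ℂ) ^ (δ - 1) * f t

/-- Right-sided Riemann–Liouville fractional integral operator. -/
noncomputable def rlRight (δ : ℂ) (f : ℝ → ℂ) (x : ℝ) : ℂ :=
  (1 / Complex.Gamma δ) * ∫ t in Set.Ioi x, ((t - x : ℝ) : ℂ) ^ (δ - 1) * f t

/-- Left-sided Erdélyi–Kober fractional integral operator `I⁺_{ε,δ}`. -/
noncomputable def ekLeft (ε δ : ℂ) (f : ℝ → ℂ) (x : ℝ) : ℂ :=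
  (x : ℂ) ^ (-δ - ε) / Complex.Gamma δ *
    ∫ t in Set.Ioo (0 : ℝ) x, ((x - t : ℝ) : ℂ) ^ (δ - 1) * (t : ℂ) ^ ε * f t

/-- Right-sided Erdélyi–Kober fractional integral operator `K⁻_{ε,δ}`. -/
noncomputable def ekRight (ε δ : ℂ) (f : ℝ → ℂ) (x : ℝ) : ℂ :=
  (x : ℂ) ^ ε / Complex.Gamma δ *
    ∫ t in Set.Ioi x, ((t - x : ℝ) : ℂ) ^ (δ - 1) * (t : ℂ) ^ (-δ - ε) * f t

/-- Left-sided Marichev–Saigo–Maeda fractional derivative operator. -/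
noncomputable def msmDLeft (δ δ' μ μ' ε : ℂ) (f : ℝ → ℂ) (x : ℝ) : ℂ :=
  iteratedDeriv (⌊ε.re⌋ + 1).toNat
    (msmLeft (-δ') (-δ) (-μ' + ((⌊ε.re⌋ + 1 : ℤ) : ℂ)) (-μ) (-ε + ((⌊ε.re⌋ + 1 : ℤ) : ℂ)) f) x

/-- Right-sided Marichev–Saigo–Maeda fractional derivative operator. -/
noncomputable def msmDRight (δ δ' μ μ' ε : ℂ) (f : ℝ → ℂ) (x : ℝ) : ℂ :=
  (-1 : ℂ) ^ (⌊ε.re⌋ + 1).toNat * iteratedDeriv (⌊ε.re⌋ + 1).toNat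
    (msmRight (-δ') (-δ) (-μ') (-μ + ((⌊ε.re⌋ + 1 : ℤ) : ℂ)) (-ε + ((⌊ε.re⌋ + 1 : ℤ) : ℂ)) f) x

section Helpers
open Filter Topology Complex

lemma poch_succ (a : ℂ) (n : ℕ) : poch a (n + 1) = poch a n * (a + n) := by
  simp [poch, Finset.prod_range_succ]

lemma poch_ne_zero {c : ℂ} (hc : 0 < c.re) (n : ℕ) : poch c n ≠ 0 := by
  refine Finset.prod_ne_zero_iff.mpr fun i _ h => ?_
  have := congrArg Complex.re h
  simp at this
  have h2 : (0 : ℝ) ≤ i := Nat.cast_nonneg i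
  linarith

lemma Gamma_add_nat_poch {c : ℂ} (hc : 0 < c.re) (n : ℕ) :
    Complex.Gamma (c + n) = Complex.Gamma c * poch c n := by
  induction n with
  | zero => simp [poch]
  | succ n ih =>
    have h : c + n ≠ 0 := by
      intro h
      have := congrArg Complex.re h
      simp at this
      have h2 : (0 : ℝ) ≤ n := Nat.cast_nonneg n
      linarith
    rw [poch_succ, Nat.cast_succ, ← add_assoc, Complex.Gamma_add_one _ h, ih]
    ring

lemma gammaSeq_poch (s : ℂ) (n : ℕ) :
    Complex.GammaSeq s n = (n : ℂ) ^ s * n.factorial / poch s (n + 1) := rfl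

lemma gammaSeq_inv_tendsto (s : ℂ) :
    Tendsto (fun n => (Complex.GammaSeq s n)⁻¹) atTop (𝓝 (Complex.Gamma s)⁻¹) := by
  by_cases h : Complex.Gamma s = 0
  · rw [h, inv_zero]
    obtain ⟨m, rfl⟩ := (Complex.Gamma_eq_zero_iff s).1 h
    refine tendsto_const_nhds.congr' ?_
    filter_upwards [eventually_ge_atTop m] with n hn
    have : poch (-(m : ℂ)) (n + 1) = 0 :=
      Finset.prod_eq_zero (i := m) (Finset.mem_range.mpr (by omega)) (by simp)
    rw [gammaSeq_poch, this]
    simp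
  · exact (Complex.GammaSeq_tendsto_Gamma s).inv₀ h

lemma bdd_of_tendsto {u : ℕ → ℂ} {l : ℂ} (h : Tendsto u atTop (𝓝 l)) :
    ∃ K : ℝ, 0 ≤ K ∧ ∀ n, ‖u n‖ ≤ K := by
  obtain ⟨K, hK⟩ := (Metric.isBounded_range_of_tendsto u h).exists_norm_le
  exact ⟨K, (norm_nonneg _).trans (hK (u 0) ⟨0, rfl⟩), fun n => hK _ ⟨n, rfl⟩⟩

/-- General term of the Gauss series at one. -/
noncomputable def gT (a b c : ℂ) (n : ℕ) : ℂ := poch a n * poch b n / (poch c n * n.factorial)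

lemma gT_bound (a b c : ℂ) (hc : 0 < c.re) :
    ∃ K : ℝ, 0 ≤ K ∧ ∀ n : ℕ, 1 ≤ n →
      ((n : ℝ) + 1) * ‖gT a b c (n + 1)‖ ≤ K * (n : ℝ) ^ ((a + b - c).re) := by
  have h := ((gammaSeq_inv_tendsto a).mul (gammaSeq_inv_tendsto b)).mul
    (Complex.GammaSeq_tendsto_Gamma c)
  obtain ⟨K, hK0, hK⟩ := bdd_of_tendsto h
  refine ⟨K, hK0, fun n hn => ?_⟩
  have hn0 : (n : ℂ) ≠ 0 := by exact_mod_cast (by omega : n ≠ 0)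
  have hf : (n.factorial : ℂ) ≠ 0 := by exact_mod_cast n.factorial_ne_zero
  have hn1 : ((n : ℂ) + 1) ≠ 0 := by exact_mod_cast (by omega : n + 1 ≠ 0)
  have hp := poch_ne_zero hc (n + 1)
  have key : ((n : ℂ) + 1) * gT a b c (n + 1) =
      ((Complex.GammaSeq a n)⁻¹ * (Complex.GammaSeq b n)⁻¹ * Complex.GammaSeq c n) *
        (n : ℂ) ^ (a + b - c) := by
    rw [cpow_sub _ _ hn0, cpow_add _ _ hn0]
    have h1 : (n : ℂ) ^ a ≠ 0 := by simp [cpow_eq_zero_iff, hn0]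
    have h2 : (n : ℂ) ^ b ≠ 0 := by simp [cpow_eq_zero_iff, hn0]
    have h3 : (n : ℂ) ^ c ≠ 0 := by simp [cpow_eq_zero_iff, hn0]
    rw [gammaSeq_poch, gammaSeq_poch, gammaSeq_poch, gT, Nat.factorial_succ]
    push_cast
    field_simp
  have hnorm : ‖((n : ℂ) + 1)‖ = (n : ℝ) + 1 := by
    have : ((n : ℂ) + 1) = (((n : ℝ) + 1 : ℝ) : ℂ) := by push_cast; rfl
    rw [this, Complex.norm_real, Real.norm_of_nonneg (by positivity)]
  rw [← hnorm, ← norm_mul, key, norm_mul, Complex.norm_natCast_cpow_of_pos (by omega)]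
  exact mul_le_mul_of_nonneg_right (hK n) (by positivity)

lemma gT_summable (a b c : ℂ) (hc : 0 < c.re) (h : 0 < (c - a - b).re) :
    Summable fun n => ‖gT a b c n‖ := by
  obtain ⟨K, hK0, hK⟩ := gT_bound a b c hc
  rw [← summable_nat_add_iff 2]
  have hs : Summable fun n : ℕ => K * ((n + 1 : ℕ) : ℝ) ^ ((a + b - c).re - 1) := by
    refine Summable.mul_left K ?_
    refine (summable_nat_add_iff (f := fun n : ℕ => (n : ℝ) ^ ((a + b - c).re - 1)) 1).mpr ?_
    rw [Real.summable_nat_rpow]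
    simp at h ⊢
    linarith
  refine Summable.of_nonneg_of_le (fun _ => norm_nonneg _) (fun n => ?_) hs
  have h1 := hK (n + 1) (by omega)
  have hp : (0 : ℝ) < ((n + 1 : ℕ) : ℝ) := by positivity
  rw [Real.rpow_sub hp, Real.rpow_one, ← mul_div_assoc, le_div_iff₀ hp]
  refine le_trans ?_ h1
  rw [mul_comm]
  exact mul_le_mul_of_nonneg_right (by linarith) (norm_nonneg _)

lemma gT_tendsto (a b c : ℂ) (hc : 0 < c.re) (h : 0 < (c - a - b).re) :
    Tendsto (fun n : ℕ => (n : ℂ) * gT a b c n) atTop (𝓝 0) := by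
  obtain ⟨K, hK0, hK⟩ := gT_bound a b c hc
  rw [← tendsto_add_atTop_iff_nat 1]
  have ht : Tendsto (fun n : ℕ => K * (n : ℝ) ^ ((a + b - c).re)) atTop (𝓝 0) := by
    have h1 := (tendsto_rpow_neg_atTop h).comp tendsto_natCast_atTop_atTop
    have h2 := h1.const_mul K
    rw [mul_zero] at h2
    refine h2.congr fun n => ?_
    simp only [Function.comp]
    congr 2
    simp; ring
  refine squeeze_zero_norm' ?_ ht
  filter_upwards [eventually_ge_atTop 1] with n hn
  rw [norm_mul, Complex.norm_natCast]
  push_cast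
  exact hK n hn

lemma gT_telescope (a b c : ℂ) (hc : 0 < c.re) (n : ℕ) :
    c * (c - a - b) * gT a b c n - (c - a) * (c - b) * gT a b (c + 1) n =
      (-c) * (((n + 1 : ℕ) : ℂ) * gT a b c (n + 1)) - (-c) * ((n : ℂ) * gT a b c n) := by
  have hp := poch_ne_zero hc n
  have hp' := poch_ne_zero hc (n + 1)
  have hc1 : 0 < (c + 1).re := by simp; linarith
  have hq := poch_ne_zero hc1 n
  have hf : (n.factorial : ℂ) ≠ 0 := by exact_mod_cast n.factorial_ne_zero
  have hn1 : ((n : ℂ) + 1) ≠ 0 := by exact_mod_cast (by omega : n + 1 ≠ 0)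
  have hc0 : c ≠ 0 := by rintro rfl; simp at hc
  have hcn : c + n ≠ 0 := fun h => by rw [poch_succ, h, mul_zero] at hp'; exact hp' rfl
  have hshift : c * poch (c + 1) n = poch c n * (c + n) := by
    rw [← poch_succ]
    simp only [poch]
    rw [Finset.prod_range_succ']
    simp only [Nat.cast_zero, add_zero]
    rw [mul_comm]
    congr 1
    refine Finset.prod_congr rfl fun i _ => ?_
    push_cast; ring
  have hq' : poch (c + 1) n = poch c n * (c + n) / c := by
    rw [eq_div_iff hc0, mul_comm, hshift]
  simp only [gT]
  rw [hq', poch_succ, poch_succ, poch_succ, Nat.factorial_succ]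
  push_cast
  field_simp
  ring

lemma gT_contig (a b c : ℂ) (hc : 0 < c.re) (h : 0 < (c - a - b).re) :
    c * (c - a - b) * ∑' n, gT a b c n = (c - a) * (c - b) * ∑' n, gT a b (c + 1) n := by
  have hc1 : 0 < (c + 1).re := by simp; linarith
  have h1 : 0 < (c + 1 - a - b).re := by simp at h ⊢; linarith
  have s1 := (gT_summable a b c hc h).of_norm
  have s2 := (gT_summable a b (c + 1) hc1 h1).of_norm
  have hs := (s1.hasSum.mul_left (c * (c - a - b))).sub (s2.hasSum.mul_left ((c - a) * (c - b)))
  have ht := hs.tendsto_sum_nat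
  have : ∀ N : ℕ, ∑ n ∈ Finset.range N,
      (c * (c - a - b) * gT a b c n - (c - a) * (c - b) * gT a b (c + 1) n) =
      (-c) * ((N : ℂ) * gT a b c N) := by
    intro N
    rw [Finset.sum_congr rfl fun n _ => gT_telescope a b c hc n,
      Finset.sum_range_sub (fun n : ℕ => (-c) * ((n : ℂ) * gT a b c n))]
    simp
  simp only [this] at ht
  have h0 := (gT_tendsto a b c hc h).const_mul (-c)
  rw [mul_zero] at h0
  exact sub_eq_zero.1 (tendsto_nhds_unique ht h0)

lemma gT_iter (a b c : ℂ) (hc : 0 < c.re) (h : 0 < (c - a - b).re) (m : ℕ) :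
    poch c m * poch (c - a - b) m * ∑' n, gT a b c n =
      poch (c - a) m * poch (c - b) m * ∑' n, gT a b (c + m) n := by
  induction m with
  | zero => simp [poch]
  | succ m ih =>
    have hm : (0 : ℝ) ≤ m := Nat.cast_nonneg m
    have := gT_contig a b (c + m) (by simp; linarith) (by simp at h ⊢; linarith)
    simp only [poch_succ]
    push_cast
    rw [← add_assoc]
    linear_combination (c + m) * (c - a - b + m) * ih + poch (c - a) m * poch (c - b) m * this

lemma norm_poch_le {c d : ℂ} (h : ∀ i : ℕ, ‖c + i‖ ≤ ‖d + i‖) (n : ℕ) :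
    ‖poch c n‖ ≤ ‖poch d n‖ := by
  simp only [poch, norm_prod]
  exact Finset.prod_le_prod (fun _ _ => norm_nonneg _) fun i _ => h i

lemma norm_le_of_re_im {z w : ℂ} (h0 : 0 ≤ z.re) (h : z.re ≤ w.re) (h' : |z.im| ≤ |w.im|) :
    ‖z‖ ≤ ‖w‖ := by
  rw [Complex.norm_def, Complex.norm_def]
  apply Real.sqrt_le_sqrt
  rw [Complex.normSq_apply, Complex.normSq_apply]
  have := sq_le_sq.mpr h'
  nlinarith

lemma gT_limit (a b c : ℂ) (hc : 0 < c.re) (h : 0 < (c - a - b).re) :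
    Tendsto (fun m : ℕ => ∑' n, gT a b (c + m) n) atTop (𝓝 1) := by
  have h1 : ∑' n : ℕ, (if n = 0 then (1 : ℂ) else 0) = 1 := tsum_ite_eq 0 1
  rw [← h1]
  refine tendsto_tsum_of_dominated_convergence (gT_summable a b c hc h) (fun n => ?_) ?_
  · cases n with
    | zero => simp [gT, poch]
    | succ n =>
      simp only [Nat.succ_ne_zero, if_false]
      have hinv : Tendsto (fun m : ℕ => (poch (c + m) (n + 1))⁻¹) atTop (𝓝 0) := by
        rw [tendsto_zero_iff_norm_tendsto_zero]
        have hlim : Tendsto (fun m : ℕ => (m : ℝ)⁻¹ * ‖poch (c + 1) n‖⁻¹) atTop (𝓝 0) := by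
          have := (tendsto_inv_atTop_zero.comp (tendsto_natCast_atTop_atTop (R := ℝ))).mul_const
            (‖poch (c + 1) n‖⁻¹)
          simpa using this
        refine squeeze_zero' (Eventually.of_forall fun _ => norm_nonneg _) ?_ hlim
        filter_upwards [eventually_ge_atTop 1] with m hm
        have hmr : (1 : ℝ) ≤ m := by exact_mod_cast hm
        rw [norm_inv, ← mul_inv]
        have hc1 : 0 < (c + 1).re := by simp; linarith
        have hpos : 0 < ‖poch (c + 1) n‖ := norm_pos_iff.2 (poch_ne_zero hc1 n)
        apply inv_anti₀ (by positivity)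
        have e1 : ‖poch (c + 1) n‖ ≤ ‖poch (c + m) n‖ := by
          apply norm_poch_le
          intro i
          have hi : (0 : ℝ) ≤ i := Nat.cast_nonneg i
          apply norm_le_of_re_im <;> simp <;> linarith
        have e2 : (m : ℝ) ≤ ‖c + m + n‖ := by
          refine le_trans ?_ (Complex.re_le_norm _)
          have hi : (0 : ℝ) ≤ n := Nat.cast_nonneg n
          simp; linarith
        rw [poch_succ, norm_mul, mul_comm]
        exact mul_le_mul e1 e2 (by positivity) (norm_nonneg _)
      have := hinv.const_mul (poch a (n + 1) * poch b (n + 1) / ((n + 1).factorial : ℂ))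
      rw [mul_zero] at this
      refine this.congr fun m => ?_
      rw [gT, div_eq_mul_inv, div_eq_mul_inv, mul_inv]
      ring
  · refine Eventually.of_forall fun m n => ?_
    rw [gT, gT, norm_div, norm_div, norm_mul (poch _ _) (n.factorial : ℂ),
      norm_mul (poch _ _) (n.factorial : ℂ)]
    have hf : 0 < ‖(n.factorial : ℂ)‖ := by
      rw [Complex.norm_natCast]; exact_mod_cast n.factorial_pos
    have hpos : 0 < ‖poch c n‖ := norm_pos_iff.2 (poch_ne_zero hc n)
    have e1 : ‖poch c n‖ ≤ ‖poch (c + m) n‖ := by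
      apply norm_poch_le
      intro i
      have hi : (0 : ℝ) ≤ i := Nat.cast_nonneg i
      have hm : (0 : ℝ) ≤ m := Nat.cast_nonneg m
      apply norm_le_of_re_im <;> simp <;> linarith
    gcongr

/-- Gauss summation theorem. -/
lemma gauss_sum (a b c : ℂ) (hc : 0 < c.re) (h : 0 < (c - a - b).re) :
    ∑' n, gT a b c n = Complex.Gamma c * Complex.Gamma (c - a - b) /
      (Complex.Gamma (c - a) * Complex.Gamma (c - b)) := by
  have hl := ((((Complex.GammaSeq_tendsto_Gamma c).mul
    (Complex.GammaSeq_tendsto_Gamma (c - a - b))).mul (gammaSeq_inv_tendsto (c - a))).mul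
    (gammaSeq_inv_tendsto (c - b))).mul
    ((gT_limit a b c hc h).comp (tendsto_add_atTop_nat 1))
  have : Complex.Gamma c * Complex.Gamma (c - a - b) /
      (Complex.Gamma (c - a) * Complex.Gamma (c - b)) = Complex.Gamma c *
      Complex.Gamma (c - a - b) * (Complex.Gamma (c - a))⁻¹ * (Complex.Gamma (c - b))⁻¹ * 1 := by
    rw [div_eq_mul_inv, mul_inv]; ring
  rw [this]
  refine tendsto_nhds_unique (tendsto_const_nhds.congr' ?_) hl
  filter_upwards [eventually_ge_atTop 1] with n hn
  have hn0 : (n : ℂ) ≠ 0 := by exact_mod_cast (by omega : n ≠ 0)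
  have hf : (n.factorial : ℂ) ≠ 0 := by exact_mod_cast n.factorial_ne_zero
  have hx : ∀ s : ℂ, (n : ℂ) ^ s ≠ 0 := fun s => by simp [cpow_eq_zero_iff, hn0]
  have hi := gT_iter a b c hc h (n + 1)
  have p1 := poch_ne_zero hc (n + 1)
  have p2 := poch_ne_zero h (n + 1)
  have hpow : (n : ℂ) ^ c * (n : ℂ) ^ (c - a - b) = (n : ℂ) ^ (c - a) * (n : ℂ) ^ (c - b) := by
    rw [← cpow_add _ _ hn0, ← cpow_add _ _ hn0]; congr 1; ring
  simp only [Function.comp, gammaSeq_poch]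
  have h1 := hx (c - a)
  have h2 := hx (c - b)
  have hi' : ∑' n, gT a b c n = poch (c - a) (n + 1) * poch (c - b) (n + 1) *
      (∑' k, gT a b (c + ((n + 1 : ℕ) : ℂ)) k) / (poch c (n + 1) * poch (c - a - b) (n + 1)) := by
    rw [eq_div_iff (mul_ne_zero p1 p2), ← hi]; ring
  rw [hi']
  generalize (∑' k, gT a b (c + ((n + 1 : ℕ) : ℂ)) k) = S
  simp only [inv_div]
  field_simp
  linear_combination (-(poch (c - a) (n + 1) * poch (c - b) (n + 1) * S)) * hpow

/-- Integrand of the n-th term. -/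
noncomputable def tI (δ τ : ℂ) (x : ℝ) (n : ℕ) (t : ℝ) : ℂ :=
  ((x - t : ℝ) : ℂ) ^ (δ - 1) * ((1 - t / x : ℝ) : ℂ) ^ n * (t : ℂ) ^ (τ - 1)

lemma tI_eq (δ τ : ℂ) (x : ℝ) (hx : 0 < x) (n : ℕ) (t : ℝ) (ht : t ∈ Set.Ioo 0 x) :
    tI δ τ x n t = ((x : ℂ) ^ n)⁻¹ *
      ((t : ℂ) ^ (τ - 1) * ((x : ℂ) - (t : ℂ)) ^ (δ + n - 1)) := by
  have hx0 : (x : ℂ) ≠ 0 := by exact_mod_cast hx.ne'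
  have hxt : (x : ℂ) - (t : ℂ) ≠ 0 := by
    rw [← Complex.ofReal_sub]; exact_mod_cast (sub_pos.2 ht.2).ne'
  have e : (1 : ℂ) - t / x = (x - t) / x := by field_simp
  rw [tI]
  push_cast
  rw [e, show δ + n - 1 = (δ - 1) + n by ring, cpow_add _ _ hxt, cpow_natCast, div_pow]
  field_simp

lemma scaled_integrable (s t : ℂ) (hs : 0 < s.re) (ht : 0 < t.re) {a : ℝ} (ha : 0 < a) :
    IntegrableOn (fun x : ℝ => (x : ℂ) ^ (s - 1) * ((a : ℂ) - x) ^ (t - 1)) (Set.Ioo 0 a) := by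
  rw [← integrableOn_Ioc_iff_integrableOn_Ioo, ← intervalIntegrable_iff_integrableOn_Ioc_of_le ha.le]
  have h := (Complex.betaIntegral_convergent hs ht).comp_mul_left (c := a⁻¹)
  have h2 := h.const_mul ((a : ℂ) ^ (s - 1) * (a : ℂ) ^ (t - 1))
  simp only [zero_div, one_div, inv_inv] at h2
  refine h2.congr ?_
  intro y hy
  rw [Set.uIoc_of_le ha.le] at hy
  have ha0 : (a : ℂ) ≠ 0 := by exact_mod_cast ha.ne'
  have e1 : (a : ℂ) ^ (s - 1) * ((a⁻¹ * y : ℝ) : ℂ) ^ (s - 1) = (y : ℂ) ^ (s - 1) := by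
    rw [← Complex.mul_cpow_ofReal_nonneg ha.le (by have := hy.1; positivity)]
    congr 1; push_cast; field_simp
  have e2 : (a : ℂ) ^ (t - 1) * (1 - ((a⁻¹ * y : ℝ) : ℂ)) ^ (t - 1) = ((a : ℂ) - y) ^ (t - 1) := by
    have h0 : (0 : ℝ) ≤ 1 - a⁻¹ * y := by
      have : a⁻¹ * y ≤ 1 := by
        rw [inv_mul_le_iff₀ ha]; linarith [hy.2]
      linarith
    have : (1 - ((a⁻¹ * y : ℝ) : ℂ)) = ((1 - a⁻¹ * y : ℝ) : ℂ) := by push_cast; rfl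
    rw [this, ← Complex.mul_cpow_ofReal_nonneg ha.le h0]
    congr 1; push_cast; field_simp
  simp only
  rw [← e1, ← e2]
  ring

lemma tI_integrable (δ τ : ℂ) (hδ : 0 < δ.re) (hτ : 0 < τ.re) (x : ℝ) (hx : 0 < x) (n : ℕ) :
    IntegrableOn (tI δ τ x n) (Set.Ioo 0 x) := by
  have hn : (0 : ℝ) ≤ n := Nat.cast_nonneg n
  have h := (scaled_integrable τ (δ + n) hτ (by simp; linarith) hx).const_mul (((x : ℂ) ^ n)⁻¹)
  exact IntegrableOn.congr_fun h (fun t ht => (tI_eq δ τ x hx n t ht).symm) measurableSet_Ioo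

lemma tI_integral (δ τ : ℂ) (hδ : 0 < δ.re) (hτ : 0 < τ.re) (x : ℝ) (hx : 0 < x) (n : ℕ) :
    ∫ t in Set.Ioo 0 x, tI δ τ x n t =
      (x : ℂ) ^ (δ + τ - 1) * (Complex.Gamma δ * Complex.Gamma τ / Complex.Gamma (δ + τ)) *
        (poch δ n / poch (δ + τ) n) := by
  have hn : (0 : ℝ) ≤ n := Nat.cast_nonneg n
  have hx0 : (x : ℂ) ≠ 0 := by exact_mod_cast hx.ne'
  rw [setIntegral_congr_fun measurableSet_Ioo (fun t ht => tI_eq δ τ x hx n t ht),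
    integral_const_mul, ← integral_Ioc_eq_integral_Ioo, ← intervalIntegral.integral_of_le hx.le,
    Complex.betaIntegral_scaled _ _ hx,
    Complex.betaIntegral_eq_Gamma_mul_div _ _ hτ (by simp; linarith),
    show τ + (δ + n) = (δ + τ) + n by ring, Gamma_add_nat_poch hδ,
    Gamma_add_nat_poch (c := δ + τ) (by simp; linarith),
    show δ + τ + n - 1 = (δ + τ - 1) + n by ring, cpow_add _ _ hx0, cpow_natCast]
  have g := Complex.Gamma_ne_zero_of_re_pos (s := δ + τ) (by simp; linarith)
  have p := poch_ne_zero (c := δ + τ) (by simp; linarith) n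
  field_simp

lemma tI_norm (δ τ : ℂ) (x : ℝ) (hx : 0 < x) (n : ℕ) (t : ℝ) (ht : t ∈ Set.Ioo 0 x) :
    ((‖tI δ τ x n t‖ : ℝ) : ℂ) = tI (δ.re : ℂ) (τ.re : ℂ) x n t := by
  have h1 : 0 < x - t := sub_pos.2 ht.2
  have h2 : 0 < 1 - t / x := by
    rw [sub_pos, div_lt_one hx]; exact ht.2
  rw [tI, tI, norm_mul, norm_mul, norm_pow, Complex.norm_cpow_eq_rpow_re_of_pos h1,
    Complex.norm_cpow_eq_rpow_re_of_pos ht.1, Complex.norm_real, Real.norm_of_nonneg h2.le]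
  rw [Complex.ofReal_mul, Complex.ofReal_mul, Complex.ofReal_cpow h1.le,
    Complex.ofReal_cpow ht.1.le]
  simp

lemma saigo_integrand (δ μ ε τ : ℂ) (x t : ℝ) :
    ((x - t : ℝ) : ℂ) ^ (δ - 1) * genHyp [δ + μ, -ε] [δ] ((1 - t / x : ℝ) : ℂ) *
      (t : ℂ) ^ (τ - 1) = ∑' n, gT (δ + μ) (-ε) δ n * tI δ τ x n t := by
  rw [genHyp, ← tsum_mul_left, ← tsum_mul_right]
  refine tsum_congr fun n => ?_
  simp only [List.map_cons, List.map_nil, List.prod_cons, List.prod_nil, mul_one, gT, tI]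
  simp only [div_eq_mul_inv, mul_inv]
  ring

lemma saigo_summable (a b δ τ : ℂ) (hδ : 0 < δ.re) (hτ : 0 < τ.re)
    (h : 0 < (δ + τ - a - b).re) (x : ℝ) (hx : 0 < x) :
    Summable fun n => ∫ t in Set.Ioo 0 x, ‖gT a b δ n * tI δ τ x n t‖ := by
  have hδ' : 0 < ((δ.re : ℝ) : ℂ).re := by simpa using hδ
  have hτ' : 0 < ((τ.re : ℝ) : ℂ).re := by simpa using hτ
  have hs := gT_summable a b ((δ.re : ℂ) + (τ.re : ℂ)) (by simp; linarith)
    (by simp at h ⊢; linarith)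
  set M : ℂ := (x : ℂ) ^ ((δ.re : ℂ) + (τ.re : ℂ) - 1) * (Complex.Gamma (δ.re : ℂ) *
    Complex.Gamma (τ.re : ℂ) / Complex.Gamma ((δ.re : ℂ) + (τ.re : ℂ))) with hM
  have key : ∀ n, ∫ t in Set.Ioo 0 x, ‖tI δ τ x n t‖ =
      ‖M * (poch (δ.re : ℂ) n / poch ((δ.re : ℂ) + (τ.re : ℂ)) n)‖ := by
    intro n
    rw [hM, ← tI_integral _ _ hδ' hτ' x hx n,
      ← setIntegral_congr_fun measurableSet_Ioo (fun t ht => tI_norm δ τ x hx n t ht),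
      integral_complex_ofReal, Complex.norm_real, Real.norm_of_nonneg]
    exact integral_nonneg fun _ => norm_nonneg _
  refine Summable.of_nonneg_of_le (fun n => integral_nonneg fun _ => norm_nonneg _) (fun n => ?_)
    (hs.mul_left ‖M‖)
  simp only [norm_mul (gT a b δ n)]
  rw [integral_const_mul, key]
  have e1 : ‖poch (δ.re : ℂ) n‖ ≤ ‖poch δ n‖ := by
    apply norm_poch_le
    intro i
    have hi : (0 : ℝ) ≤ i := Nat.cast_nonneg i
    apply norm_le_of_re_im <;> simp <;> linarith
  have hp : 0 < ‖poch δ n‖ := norm_pos_iff.2 (poch_ne_zero hδ n)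
  have e2 : gT a b δ n * (M * (poch (δ.re : ℂ) n / poch ((δ.re : ℂ) + (τ.re : ℂ)) n)) =
      M * gT a b ((δ.re : ℂ) + (τ.re : ℂ)) n * (poch (δ.re : ℂ) n / poch δ n) := by
    simp only [gT, div_eq_mul_inv, mul_inv]
    ring
  rw [← norm_mul, e2, norm_mul, norm_mul, norm_div]
  exact mul_le_of_le_one_right (by positivity) ((div_le_one hp).2 e1)

end Helpers

/-- Saigo left-sided fractional integral of a power function (Lemma 3). -/
theorem saigoLeft_power (δ μ ε τ : ℂ) (hδ : 0 < δ.re)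
    (hτ : max 0 ((μ - ε).re) < τ.re) (x : ℝ) (hx : 0 < x) :
    saigoLeft δ μ ε (fun t => (t : ℂ) ^ (τ - 1)) x =
      Complex.Gamma τ * Complex.Gamma (τ + ε - μ) /
        (Complex.Gamma (τ - μ) * Complex.Gamma (τ + ε + δ)) * (x : ℂ) ^ (τ - μ - 1) := by
  have hτ0 : 0 < τ.re := lt_of_le_of_lt (le_max_left _ _) hτ
  have hτ1 : (μ - ε).re < τ.re := lt_of_le_of_lt (le_max_right _ _) hτ
  have hc : 0 < (δ + τ).re := by simp; linarith
  have h : 0 < (δ + τ - (δ + μ) - (-ε)).re := by simp at hτ1 ⊢; linarith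
  have hx0 : (x : ℂ) ≠ 0 := by exact_mod_cast hx.ne'
  have hS := hasSum_integral_of_summable_integral_norm
    (fun n => (tI_integrable δ τ hδ hτ0 x hx n).const_mul (gT (δ + μ) (-ε) δ n))
    (saigo_summable (δ + μ) (-ε) δ τ hδ hτ0 h x hx)
  rw [saigoLeft]
  simp only [saigo_integrand]
  rw [← hS.tsum_eq]
  have hterm : ∀ n, ∫ t in Set.Ioo 0 x, gT (δ + μ) (-ε) δ n * tI δ τ x n t =
      (x : ℂ) ^ (δ + τ - 1) * (Complex.Gamma δ * Complex.Gamma τ / Complex.Gamma (δ + τ)) *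
        gT (δ + μ) (-ε) (δ + τ) n := by
    intro n
    rw [integral_const_mul, tI_integral δ τ hδ hτ0 x hx n]
    have p1 := poch_ne_zero hδ n
    have p2 := poch_ne_zero hc n
    have hf : (n.factorial : ℂ) ≠ 0 := by exact_mod_cast n.factorial_ne_zero
    simp only [gT]
    field_simp
  simp only [hterm]
  rw [tsum_mul_left, gauss_sum _ _ _ hc h,
    show δ + τ - (δ + μ) - (-ε) = τ + ε - μ by ring, show δ + τ - (δ + μ) = τ - μ by ring,
    show δ + τ - (-ε) = τ + ε + δ by ring,
    show τ - μ - 1 = (-δ - μ) + (δ + τ - 1) by ring, Complex.cpow_add _ _ hx0]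
  have g1 := Complex.Gamma_ne_zero_of_re_pos hδ
  have g2 := Complex.Gamma_ne_zero_of_re_pos hc
  simp only [div_eq_mul_inv, mul_inv]
  field_simp
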